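/- In the setting of the rescaled limit of a blowing-up sequence of representations (G finitely generated with finite generating set S, H a geodesic space with Δ-thin triangles, ρ_n : G → Isom(H) blowing up, K the complete graph on G, approximate centers x_n, equivariant straight maps ι_n with ι_n(g) = ρ_n(g)x_n, rescaling factors λ_n, and a subsequence along which λ_n · ι_n*d_H converges pointwise to a pseudo-metric d̄ with associated ℝ-tree Γ): the left-multiplication action of G on K induces an action of G on Γ by isometries that has no global fixed point; moreover some element of G acts on Γ as a hyperbolic isometry. -/

import Mathlib

open Set Filter Metric

section Common

variable {H : Type*} [MetricSpace H]

/-- `γ` parametrizes a geodesic from `a` to `b` by arclength on `[0, dist a b]`. -/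
def IsGeodesicSegment (γ : ℝ → H) (a b : H) : Prop :=
  γ 0 = a ∧ γ (dist a b) = b ∧
    ∀ s ∈ Set.Icc (0:ℝ) (dist a b), ∀ t ∈ Set.Icc (0:ℝ) (dist a b),
      dist (γ s) (γ t) = |s - t|

/-- A geodesic space: every pair of points is joined by a geodesic. -/
def GeodesicSpace (H : Type*) [MetricSpace H] : Prop :=
  ∀ a b : H, ∃ γ : ℝ → H, IsGeodesicSegment γ a b

/-- The image of a geodesic segment from `a` to `b`. -/
def segImage (γ : ℝ → H) (a b : H) : Set H :=
  γ '' Set.Icc 0 (dist a b)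

/-- A space has `Δ`-thin triangles if each side of every geodesic triangle is contained
in the `Δ`-neighborhood of the union of the other two sides. -/
def ThinTriangles (H : Type*) [MetricSpace H] (Δ : ℝ) : Prop :=
  ∀ a b c : H, ∀ γab γbc γca : ℝ → H,
    IsGeodesicSegment γab a b → IsGeodesicSegment γbc b c → IsGeodesicSegment γca c a →
      ∀ x ∈ segImage γab a b, ∃ y ∈ segImage γbc b c ∪ segImage γca c a, dist x y ≤ Δ

/-- An arc from `a` to `b`, parametrized (injectively and continuously) by `[0,1]`. -/
def IsArcParam (α : ℝ → H) (a b : H) : Prop :=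
  ContinuousOn α (Set.Icc 0 1) ∧ Set.InjOn α (Set.Icc 0 1) ∧ α 0 = a ∧ α 1 = b

/-- An `ℝ`-tree: a metric space in which every pair of points is joined by a geodesic
(so it is a path-metric space and arcs are isometric to intervals of `ℝ`) and in which
the arc joining two points is unique. -/
def IsRTree (X : Type*) [MetricSpace X] : Prop :=
  (∀ a b : X, ∃ γ : ℝ → X, IsGeodesicSegment γ a b) ∧
  ∀ a b : X, ∀ α β : ℝ → X, IsArcParam α a b → IsArcParam β a b →
    α '' Set.Icc 0 1 = β '' Set.Icc 0 1

/-- The translation length of an isometry. -/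
noncomputable def translationLength {X : Type*} [MetricSpace X] (τ : X ≃ᵢ X) : ℝ :=
  ⨅ x : X, dist x (τ x)

/-- The core of an isometry of an `ℝ`-tree: points moved the minimal distance. -/
def isomCore {X : Type*} [MetricSpace X] (τ : X ≃ᵢ X) : Set X :=
  {x : X | dist x (τ x) = translationLength τ}

/-- An elliptic isometry: one having a fixed point. -/
def IsElliptic {X : Type*} [MetricSpace X] (τ : X ≃ᵢ X) : Prop :=
  ∃ x, τ x = x

/-- A hyperbolic isometry of an `ℝ`-tree: positive translation length, with core
isometric to the real line (its axis). -/
def IsHyperbolicIsom {X : Type*} [MetricSpace X] (τ : X ≃ᵢ X) : Prop :=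
  0 < translationLength τ ∧
    ∃ e : ℝ → X, (∀ s t : ℝ, dist (e s) (e t) = |s - t|) ∧ Set.range e = isomCore τ

/-- A metric simplicial tree: an `ℝ`-tree together with a closed discrete set `V` of
vertices such that each connected component of the complement of `V` is an open edge:
it is the interior of a geodesic segment of positive length with endpoints in `V`. -/
def IsMetricSimplicialTree (X : Type*) [MetricSpace X] : Prop :=
  IsRTree X ∧
    ∃ V : Set X, IsClosed V ∧
      (∀ v ∈ V, ∃ ε > 0, ∀ w ∈ V, dist v w < ε → w = v) ∧
      ∀ x ∈ Vᶜ, ∃ L > (0:ℝ), ∃ f : ℝ → X,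
        (∀ s ∈ Set.Icc (0:ℝ) L, ∀ t ∈ Set.Icc (0:ℝ) L, dist (f s) (f t) = |s - t|) ∧
        f '' Set.Ioo 0 L = connectedComponentIn Vᶜ x ∧ f 0 ∈ V ∧ f L ∈ V

end Common

open scoped Classical

section CompleteGraph

/-- The convex combination `(1-t)·δ_u + t·δ_v` of two Dirac functions on `G`. -/
noncomputable def deltaComb {G : Type*} (u v : G) (t : ℝ) : G → ℝ :=
  fun x => (1 - t) * (if x = u then 1 else 0) + t * (if x = v then 1 else 0)

/-- The geometric realization of the complete graph `K(G)` with vertex set `G`: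
all convex combinations of two Dirac functions; `deltaComb u v t` is the point at
parameter `t` on the edge joining the vertices `u` and `v`. -/
def KG (G : Type*) : Type _ :=
  {f : G → ℝ // ∃ u v : G, ∃ t : ℝ, t ∈ Set.Icc (0:ℝ) 1 ∧ f = deltaComb u v t}

/-- The point at parameter `t ∈ [0,1]` on the edge of `K(G)` joining `u` to `v`. -/
noncomputable def kpt {G : Type*} (u v : G) (t : ℝ) (ht : t ∈ Set.Icc (0:ℝ) 1) : KG G :=
  ⟨deltaComb u v t, u, v, t, ht, rfl⟩

/-- The vertex of `K(G)` corresponding to `g : G`. -/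
noncomputable def vtx {G : Type*} (g : G) : KG G :=
  kpt g g 0 ⟨le_refl _, zero_le_one⟩

/-- The action of `G` on `K(G)` by left multiplication on the vertices, extended
affinely over the edges. -/
noncomputable def leftMulKG {G : Type*} [Group G] (g : G) (p : KG G) : KG G :=
  ⟨fun x => p.1 (g⁻¹ * x), by
    obtain ⟨u, v, t, ht, hf⟩ := p.2
    refine ⟨g * u, g * v, t, ht, ?_⟩
    funext x
    rw [hf]
    simp [deltaComb, inv_mul_eq_iff_eq_mul]⟩

/-- A map `ι : K(G) → H` is straight if it is linear on each edge of `K(G)`. -/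
def StraightOnKG {G H : Type*} [MetricSpace H] (ι : KG G → H) : Prop :=
  ∀ u v : G, ∀ t : ℝ, ∀ ht : t ∈ Set.Icc (0:ℝ) 1,
    dist (ι (kpt u v 0 ⟨le_refl _, zero_le_one⟩)) (ι (kpt u v t ht))
      = t * dist (ι (kpt u v 0 ⟨le_refl _, zero_le_one⟩))
          (ι (kpt u v 1 ⟨zero_le_one, le_refl _⟩))

/-- `r_S(x) = max {d(x, ρ(α)x) : α ∈ S}`. -/
noncomputable def rS {G H : Type*} [MetricSpace H] (S : Finset G) (hS : S.Nonempty)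
    (ρ : G → (H ≃ᵢ H)) (x : H) : ℝ :=
  S.sup' hS (fun α => dist x (ρ α x))

/-- The rescaling factor `λ = (max {1, d(ι(1_G), ι(s)) : s ∈ S})⁻¹`. -/
noncomputable def rescaleFactor {G H : Type*} [Group G] [MetricSpace H]
    (S : Finset G) (hS : S.Nonempty) (ι : KG G → H) : ℝ :=
  (max 1 (S.sup' hS fun s => dist (ι (vtx (1 : G))) (ι (vtx s))))⁻¹

end CompleteGraph

/-!
Blowing up forces `r_S(x_n) → ∞`, since a displacement by `g` is at most the word length of `g`
times `r_S`. As the `x_n` are approximate centers, `r_S` is everywhere at least `r_S(x_n) - 1`,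
so after rescaling by `1 / r_S(x_n)` every point of the limit tree is moved at least `1` by some
`s ∈ S`; in particular `S` has no common fixed point.

If every element of `G` were elliptic, then `s`, `t` and `s * t` would have fixed points for all
`s, t ∈ S`, so the fixed subtrees of `S` would meet pairwise, and hence all at once by Helly's
theorem for trees (Serre's lemma). So some `g` is not elliptic. For the midpoint `m` of any segment
`[x, g x]`, the point `g m` lies between `m` and `g² m`; the segments `[gᵏ m, gᵏ⁺¹ m]` then form a
line translated by `g`, which is its axis.
-/

section Betweenness

variable {X : Type*} [MetricSpace X] {γ : ℝ → X} {a b m : X}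

/-- Metric betweenness: `m` lies on a shortest path from `a` to `b`. It is reducible so that
`linarith` sees the equation. -/
abbrev MetricBtw (a m b : X) : Prop :=
  dist a m + dist m b = dist a b

/-- Metric convexity: a set containing, with any two of its points, all points between them. In an
`ℝ`-tree these are the subtrees and the empty set. -/
def IsMetricConvex (C : Set X) : Prop :=
  ∀ a ∈ C, ∀ b ∈ C, ∀ m, MetricBtw a m b → m ∈ C

lemma IsMetricConvex.inter {C D : Set X} (hC : IsMetricConvex C) (hD : IsMetricConvex D) :
    IsMetricConvex (C ∩ D) :=
  fun a ha b hb m hm => ⟨hC a ha.1 b hb.1 m hm, hD a ha.2 b hb.2 m hm⟩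

lemma MetricBtw.symm (h : MetricBtw a m b) : MetricBtw b m a := by
  rw [MetricBtw, dist_comm b m, dist_comm m a, dist_comm b a, add_comm]
  exact h

lemma MetricBtw.dist_mem_Icc (h : MetricBtw a m b) : dist a m ∈ Icc 0 (dist a b) :=
  ⟨dist_nonneg, by linarith [dist_nonneg (x := m) (y := b)]⟩

namespace IsGeodesicSegment

lemma dist_left (hγ : IsGeodesicSegment γ a b) {s : ℝ} (hs : s ∈ Icc 0 (dist a b)) :
    dist a (γ s) = s := by
  have h := hγ.2.2 0 ⟨le_rfl, dist_nonneg⟩ s hs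
  rwa [hγ.1, zero_sub, abs_neg, abs_of_nonneg hs.1] at h

lemma dist_right (hγ : IsGeodesicSegment γ a b) {s : ℝ} (hs : s ∈ Icc 0 (dist a b)) :
    dist (γ s) b = dist a b - s := by
  have h := hγ.2.2 s hs _ ⟨dist_nonneg, le_rfl⟩
  rwa [hγ.2.1, abs_sub_comm, abs_of_nonneg (sub_nonneg.2 hs.2)] at h

lemma continuousOn (hγ : IsGeodesicSegment γ a b) : ContinuousOn γ (Icc 0 (dist a b)) := by
  have h : LipschitzOnWith 1 γ (Icc 0 (dist a b)) :=
    LipschitzOnWith.of_dist_le_mul fun s hs t ht => by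
      rw [hγ.2.2 s hs t ht, Real.dist_eq, NNReal.coe_one, one_mul]
  exact h.continuousOn

lemma injOn (hγ : IsGeodesicSegment γ a b) : InjOn γ (Icc 0 (dist a b)) := fun s hs t ht h => by
  rw [← hγ.dist_left hs, ← hγ.dist_left ht, h]

lemma metricBtw (hγ : IsGeodesicSegment γ a b) (hm : m ∈ segImage γ a b) : MetricBtw a m b := by
  obtain ⟨s, hs, rfl⟩ := hm
  rw [MetricBtw, hγ.dist_left hs, hγ.dist_right hs, add_sub_cancel]

end IsGeodesicSegment

end Betweenness

section Arcs

lemma image_comp_lineMap_Icc {X : Type*} (δ : ℝ → X) {A B : ℝ} (hAB : A < B) :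
    (δ ∘ AffineMap.lineMap A B) '' Icc (0 : ℝ) 1 = δ '' Icc A B := by
  rw [image_comp, ← segment_eq_image_lineMap, segment_eq_Icc hAB.le]

lemma isArcParam_comp_lineMap {X : Type*} [MetricSpace X] {δ : ℝ → X} {A B : ℝ} (hAB : A < B)
    (hcont : ContinuousOn δ (Icc A B)) (hinj : InjOn δ (Icc A B)) :
    IsArcParam (δ ∘ AffineMap.lineMap A B) (δ A) (δ B) := by
  have hmaps : MapsTo (AffineMap.lineMap A B) (Icc (0 : ℝ) 1) (Icc A B) := by
    rw [← segment_eq_Icc hAB.le, segment_eq_image_lineMap]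
    exact mapsTo_image _ _
  exact ⟨hcont.comp AffineMap.lineMap_continuous.continuousOn hmaps,
    hinj.comp (AffineMap.lineMap_injective ℝ hAB.ne).injOn hmaps, by simp, by simp⟩

lemma exists_concat_arc {X : Type*} [TopologicalSpace X] {f g : ℝ → X} {L M : ℝ}
    (hL : 0 ≤ L) (hM : 0 ≤ M) (hf : ContinuousOn f (Icc 0 L)) (hg : ContinuousOn g (Icc 0 M))
    (hfi : InjOn f (Icc 0 L)) (hgi : InjOn g (Icc 0 M)) (h0 : f 0 = g 0)
    (hmeet : ∀ s ∈ Icc 0 L, ∀ t ∈ Icc 0 M, f s = g t → s = 0 ∧ t = 0) :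
    ∃ δ : ℝ → X, ContinuousOn δ (Icc (-L) M) ∧ InjOn δ (Icc (-L) M) ∧
      δ (-L) = f L ∧ δ 0 = f 0 ∧ δ M = g M := by
  set δ : ℝ → X := fun r => if r ≤ 0 then f (-r) else g r
  have hleft : EqOn δ (fun r => f (-r)) (Icc (-L) 0) := fun r hr => if_pos hr.2
  have hright : EqOn δ g (Icc 0 M) := fun r hr => by
    rcases hr.1.eq_or_lt with rfl | hpos
    · simpa [δ] using h0
    · exact if_neg hpos.not_ge
  have hneg : MapsTo (fun r : ℝ => -r) (Icc (-L) 0) (Icc 0 L) := fun r hr =>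
    ⟨neg_nonneg.2 hr.2, neg_le.1 hr.1⟩
  refine ⟨δ, ?_, ?_, ?_, ?_, hright ⟨hM, le_rfl⟩⟩
  · rw [← Icc_union_Icc_eq_Icc (neg_nonpos.2 hL) hM]
    exact ((hf.comp continuous_neg.continuousOn hneg).congr hleft).union_of_isClosed
      (hg.congr hright) isClosed_Icc isClosed_Icc
  · intro s hs t ht hst
    wlog hle : s ≤ t generalizing s t
    · exact (this ht hs hst.symm (le_of_not_ge hle)).symm
    rcases le_total t 0 with ht0 | ht0
    · have hs' : s ∈ Icc (-L) 0 := ⟨hs.1, hle.trans ht0⟩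
      have ht' : t ∈ Icc (-L) 0 := ⟨ht.1, ht0⟩
      rw [hleft hs', hleft ht'] at hst
      exact neg_injective (hfi (hneg hs') (hneg ht') hst)
    have ht' : t ∈ Icc 0 M := ⟨ht0, ht.2⟩
    rcases le_total s 0 with hs0 | hs0
    · have hs' : s ∈ Icc (-L) 0 := ⟨hs.1, hs0⟩
      rw [hleft hs', hright ht'] at hst
      obtain ⟨h1, h2⟩ := hmeet _ (hneg hs') t ht' hst
      linarith
    · have hs' : s ∈ Icc 0 M := ⟨hs0, hs.2⟩
      rw [hright hs', hright ht'] at hst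
      exact hgi hs' ht' hst
  · simpa using hleft (left_mem_Icc.2 (neg_nonpos.2 hL))
  · simpa using hleft (right_mem_Icc.2 (neg_nonpos.2 hL))

end Arcs

namespace IsRTree

variable {X : Type*} [MetricSpace X] {γ : ℝ → X} {a b c d m p q y : X}

lemma image_eq_segImage (hX : IsRTree X) {δ : ℝ → X} {A B : ℝ} (hAB : A < B)
    (hcont : ContinuousOn δ (Icc A B)) (hinj : InjOn δ (Icc A B))
    (hγ : IsGeodesicSegment γ (δ A) (δ B)) : δ '' Icc A B = segImage γ (δ A) (δ B) := by
  have hne : δ A ≠ δ B := fun h => hAB.ne (hinj ⟨le_rfl, hAB.le⟩ ⟨hAB.le, le_rfl⟩ h)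
  have harc := isArcParam_comp_lineMap (dist_pos.2 hne) hγ.continuousOn hγ.injOn
  rw [hγ.1, hγ.2.1] at harc
  rw [segImage, ← image_comp_lineMap_Icc δ hAB, ← image_comp_lineMap_Icc γ (dist_pos.2 hne)]
  exact hX.2 _ _ _ _ (isArcParam_comp_lineMap hAB hcont hinj) harc

lemma mem_segImage_of_inter_eq (hX : IsRTree X)
    (hmeet : ∀ q, MetricBtw p q a → MetricBtw p q b → q = p) (hγ : IsGeodesicSegment γ a b) :
    p ∈ segImage γ a b := by
  rcases eq_or_ne a b with rfl | hab
  · have hap : a = p := hmeet a (by simp) (by simp)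
    exact ⟨0, ⟨le_rfl, dist_nonneg⟩, hγ.1.trans hap⟩
  obtain ⟨α, hα⟩ := hX.1 p a
  obtain ⟨β, hβ⟩ := hX.1 p b
  have hαβ : ∀ s ∈ Icc 0 (dist p a), ∀ t ∈ Icc 0 (dist p b), α s = β t → s = 0 ∧ t = 0 := by
    intro s hs t ht hst
    have hq : α s = p :=
      hmeet _ (hα.metricBtw ⟨s, hs, rfl⟩) (hβ.metricBtw ⟨t, ht, hst.symm⟩)
    rw [← hα.dist_left hs, ← hβ.dist_left ht, ← hst, hq, dist_self]
    exact ⟨rfl, rfl⟩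
  obtain ⟨δ, hcont, hinj, hA, h0, hB⟩ := exists_concat_arc dist_nonneg dist_nonneg
    hα.continuousOn hβ.continuousOn hα.injOn hβ.injOn (hα.1.trans hβ.1.symm) hαβ
  rw [hα.2.1] at hA
  rw [hβ.2.1] at hB
  have hlt : -dist p a < dist p b := by
    refine (neg_nonpos.2 dist_nonneg |>.trans dist_nonneg).lt_of_ne fun h => hab ?_
    rw [← hA, h, hB]
  have himage := hX.image_eq_segImage hlt hcont hinj (by rwa [hA, hB])
  rw [hA, hB] at himage
  exact himage ▸ ⟨0, ⟨neg_nonpos.2 dist_nonneg, dist_nonneg⟩, h0.trans hα.1⟩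

lemma segImage_eq (hX : IsRTree X) (hγ : IsGeodesicSegment γ a b) :
    segImage γ a b = {p | MetricBtw a p b} := by
  refine Subset.antisymm (fun p hp => hγ.metricBtw hp) fun p (hp : MetricBtw a p b) =>
    hX.mem_segImage_of_inter_eq (fun q hqa hqb => ?_) hγ
  have htri := dist_triangle a q b
  refine dist_le_zero.1 ?_
  linarith [dist_comm q p, dist_comm q a, dist_comm p a]

lemma dist_eq_abs_sub (hX : IsRTree X) (hp : MetricBtw a p b) (hq : MetricBtw a q b) :
    dist p q = |dist a p - dist a q| := by
  obtain ⟨γ, hγ⟩ := hX.1 a b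
  have hp' : p ∈ segImage γ a b := (hX.segImage_eq hγ).symm ▸ hp
  have hq' : q ∈ segImage γ a b := (hX.segImage_eq hγ).symm ▸ hq
  obtain ⟨s, hs, rfl⟩ := hp'
  obtain ⟨t, ht, rfl⟩ := hq'
  rw [hγ.dist_left hs, hγ.dist_left ht, hγ.2.2 s hs t ht]

lemma eq_of_metricBtw (hX : IsRTree X) (hp : MetricBtw a p b) (hq : MetricBtw a q b)
    (h : dist a p = dist a q) : p = q := by
  rw [← dist_eq_zero, hX.dist_eq_abs_sub hp hq, h, sub_self, abs_zero]

lemma isMetricConvex_setOf_metricBtw (hX : IsRTree X) (a b : X) :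
    IsMetricConvex {p | MetricBtw a p b} := by
  intro p (hp : MetricBtw a p b) q (hq : MetricBtw a q b) m hm
  wlog hle : dist a p ≤ dist a q generalizing p q
  · exact this q hq p hp hm.symm (le_of_not_ge hle)
  have hpq := hX.dist_eq_abs_sub hp hq
  rw [abs_of_nonpos (sub_nonpos.2 hle)] at hpq
  refine le_antisymm ?_ (dist_triangle a m b)
  linarith [dist_triangle a p m, dist_triangle m q b]

lemma metricBtw_of_isMinOn (hX : IsRTree X) {C : Set X} (hC : IsMetricConvex C) (hm : m ∈ C)
    (hmin : IsMinOn (dist y) C m) (hc : c ∈ C) : MetricBtw y m c := by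
  obtain ⟨γ, hγ⟩ := hX.1 y c
  refine hγ.metricBtw (hX.mem_segImage_of_inter_eq (fun q hqy hqc => ?_) hγ)
  have hle : dist y m ≤ dist y q := hmin (hC m hm c hc q hqc)
  refine dist_le_zero.1 ?_
  linarith [dist_comm q m, dist_comm q y, dist_comm m y]

lemma exists_median (hX : IsRTree X) (a b c : X) :
    ∃ m, MetricBtw a m b ∧ MetricBtw a m c ∧ MetricBtw b m c := by
  obtain ⟨γ, hγ⟩ := hX.1 b c
  have hcompact : IsCompact {p | MetricBtw b p c} := by
    rw [← hX.segImage_eq hγ]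
    exact isCompact_Icc.image_of_continuousOn hγ.continuousOn
  obtain ⟨m, hm, hmin⟩ := hcompact.exists_isMinOn ⟨b, by simp⟩
    (continuous_const.dist continuous_id).continuousOn (f := dist a)
  have hconv := hX.isMetricConvex_setOf_metricBtw b c
  exact ⟨m, hX.metricBtw_of_isMinOn hconv hm hmin (by simp),
    hX.metricBtw_of_isMinOn hconv hm hmin (by simp), hm⟩

-- The medians of `w x z` and of `w z y` both lie between `w` and `z`; their order there decides
-- which of the two sums dominates.
lemma dist_add_dist_le_max (hX : IsRTree X) (x y z w : X) :
    dist x y + dist z w ≤ max (dist x z + dist y w) (dist x w + dist y z) := by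
  obtain ⟨m, hwx, hwz, hxz⟩ := hX.exists_median w x z
  obtain ⟨n, hwz', hwy, hzy⟩ := hX.exists_median w z y
  have hmn := hX.dist_eq_abs_sub hwz hwz'
  have htri := dist_triangle4 x m n y
  rcases le_total (dist w m) (dist w n) with h | h
  · rw [abs_of_nonpos (sub_nonpos.2 h)] at hmn
    refine le_max_of_le_left ?_
    linarith [dist_comm x m, dist_comm y w, dist_comm z w, dist_comm z n]
  · rw [abs_of_nonneg (sub_nonneg.2 h)] at hmn
    refine le_max_of_le_right ?_
    linarith [dist_comm x m, dist_comm x w, dist_comm y z, dist_comm z w, dist_comm z n]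

lemma metricBtw_trans_of_ne (hX : IsRTree X) (habc : MetricBtw a b c)
    (hbcd : MetricBtw b c d) (hbc : b ≠ c) : MetricBtw a c d := by
  have hpos := dist_pos.2 hbc
  refine le_antisymm ?_ (dist_triangle a c d)
  rcases le_max_iff.1 (hX.dist_add_dist_le_max a c b d) with h | h <;>
    linarith [dist_comm c b]

lemma exists_midpoint (hX : IsRTree X) (a b : X) :
    ∃ m, dist a m = dist a b / 2 ∧ dist m b = dist a b / 2 := by
  obtain ⟨γ, hγ⟩ := hX.1 a b
  have hs : dist a b / 2 ∈ Icc 0 (dist a b) := ⟨by positivity, half_le_self dist_nonneg⟩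
  exact ⟨γ (dist a b / 2), hγ.dist_left hs, by rw [hγ.dist_right hs, sub_half]⟩

section EllipticIsometries

variable {g h : X ≃ᵢ X}

lemma isMetricConvex_fixedPoints (hX : IsRTree X) (g : X ≃ᵢ X) :
    IsMetricConvex {x | g x = x} := by
  intro a (ha : g a = a) b (hb : g b = b) m hm
  have hga : dist a (g m) = dist a m := by simpa only [ha] using g.dist_eq a m
  have hgb : dist (g m) b = dist m b := by simpa only [hb] using g.dist_eq m b
  exact hX.eq_of_metricBtw (by rwa [MetricBtw, hga, hgb]) hm hga

lemma isFixedPt_midpoint (hX : IsRTree X) (hg : IsElliptic g) (hy : dist y m = dist y (g y) / 2)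
    (hgy : dist m (g y) = dist y (g y) / 2) : g m = m := by
  obtain ⟨f, hf⟩ := hg
  have hfy : dist f (g y) = dist f y := by simpa only [hf] using g.dist_eq f y
  have hfm : dist f (g m) = dist f m := by simpa only [hf] using g.dist_eq f m
  have hmy := g.dist_eq m y
  have hle : dist f m ≤ dist f y - dist y (g y) / 2 := by
    rcases le_max_iff.1 (hX.dist_add_dist_le_max f m y (g y)) with h | h <;>
      linarith [dist_comm m y]
  have htri := dist_triangle f m y
  refine hX.eq_of_metricBtw (a := f) (b := g y) ?_ ?_ hfm <;> unfold MetricBtw <;>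
    linarith [dist_comm m y]

-- A point fixed by `g * h` is moved by `h` and by `g⁻¹` to the same point, so the midpoint of that
-- displacement is fixed by both.
lemma exists_common_fixedPoint (hX : IsRTree X) (hg : IsElliptic g) (hh : IsElliptic h)
    (hgh : IsElliptic (g * h)) : ∃ x, g x = x ∧ h x = x := by
  obtain ⟨z, hz⟩ := hgh
  have hz' : g (h z) = z := hz
  obtain ⟨m, hzm, hmz⟩ := hX.exists_midpoint z (h z)
  refine ⟨m, hX.isFixedPt_midpoint (y := h z) hg ?_ ?_, hX.isFixedPt_midpoint hh hzm hmz⟩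
  · rw [hz', dist_comm (h z) m, dist_comm (h z) z, hmz]
  · rw [hz', dist_comm m z, dist_comm (h z) z, hzm]

lemma inter_inter_nonempty (hX : IsRTree X) {A B C : Set X} (hA : IsMetricConvex A)
    (hB : IsMetricConvex B) (hC : IsMetricConvex C) (hAB : (A ∩ B).Nonempty)
    (hAC : (A ∩ C).Nonempty) (hBC : (B ∩ C).Nonempty) : (A ∩ B ∩ C).Nonempty := by
  obtain ⟨a, haA, haB⟩ := hAB
  obtain ⟨b, hbA, hbC⟩ := hAC
  obtain ⟨c, hcB, hcC⟩ := hBC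
  obtain ⟨m, hab, hac, hbc⟩ := hX.exists_median a b c
  exact ⟨m, ⟨hA a haA b hbA m hab, hB a haB c hcB m hac⟩, hC b hbC c hcC m hbc⟩

lemma helly (hX : IsRTree X) {I : Type*} {S : Finset I} (hS : S.Nonempty) {F : I → Set X}
    (hconv : ∀ i ∈ S, IsMetricConvex (F i)) (hinter : ∀ i ∈ S, ∀ j ∈ S, (F i ∩ F j).Nonempty) :
    ∃ x, ∀ i ∈ S, x ∈ F i := by
  induction hS using Finset.Nonempty.cons_induction generalizing F with
  | singleton k => simpa [Set.Nonempty] using hinter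
  | cons k S hk hS ih =>
    simp only [Finset.forall_mem_cons] at hconv hinter
    obtain ⟨-, hij⟩ := hinter
    obtain ⟨x, hx⟩ := ih (F := fun i => F i ∩ F k)
      (fun i hi => (hconv.2 i hi).inter hconv.1) fun i hi j hj => by
        rw [← inter_inter_distrib_right]
        exact hX.inter_inter_nonempty (hconv.2 i hi) (hconv.2 j hj) hconv.1
          ((hij i hi).2 j hj) (hij i hi).1 (hij j hj).1
    obtain ⟨j, hj⟩ := hS
    exact ⟨x, (Finset.forall_mem_cons hk _).2 ⟨(hx j hj).2, fun i hi => (hx i hi).1⟩⟩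

theorem exists_common_fixedPoint_of_isElliptic (hX : IsRTree X) {I : Type*} {S : Finset I}
    (hS : S.Nonempty) (f : I → X ≃ᵢ X) (hf : ∀ i ∈ S, IsElliptic (f i))
    (hff : ∀ i ∈ S, ∀ j ∈ S, IsElliptic (f i * f j)) : ∃ x, ∀ i ∈ S, f i x = x :=
  hX.helly hS (fun i _ => hX.isMetricConvex_fixedPoints (f i)) fun i hi j hj =>
    hX.exists_common_fixedPoint (hf i hi) (hf j hj) (hff i hi j hj)

end EllipticIsometries

section Lines

variable {e f : ℝ → X} {ℓ : ℝ}

lemma eqOn_Icc_of_isometry (hX : IsRTree X) (he : Isometry e) (hf : Isometry f) {s t : ℝ}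
    (hs : e s = f s) (ht : e t = f t) : EqOn e f (Icc s t) := by
  intro r hr
  have hbtw : ∀ {k : ℝ → X}, Isometry k → MetricBtw (k s) (k r) (k t) := fun hk => by
    simp only [MetricBtw, hk.dist_eq, Real.dist_eq]
    rw [abs_of_nonpos (by linarith [hr.1]), abs_of_nonpos (by linarith [hr.2]),
      abs_of_nonpos (by linarith [hr.1, hr.2])]
    ring
  refine hX.eq_of_metricBtw (hbtw he) (hs ▸ ht ▸ hbtw hf) ?_
  rw [he.dist_eq, hs, hf.dist_eq]

lemma isMetricConvex_range (hX : IsRTree X) (he : Isometry e) : IsMetricConvex (range e) := by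
  rintro _ ⟨s, rfl⟩ _ ⟨t, rfl⟩ q hq
  wlog hst : s ≤ t generalizing s t
  · exact this t s hq.symm (le_of_not_ge hst)
  have hdist : dist (e s) (e t) = t - s := by
    rw [he.dist_eq, dist_comm, Real.dist_eq, abs_of_nonneg (sub_nonneg.2 hst)]
  have hr := hdist ▸ hq.dist_mem_Icc
  have hsr : dist (e s) (e (s + dist (e s) q)) = dist (e s) q := by
    rw [he.dist_eq, dist_self_add_right, Real.norm_eq_abs, abs_dist]
  refine ⟨s + dist (e s) q, hX.eq_of_metricBtw (a := e s) (b := e t) ?_ hq hsr⟩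
  rw [MetricBtw, hsr, hdist, he.dist_eq, Real.dist_eq, abs_of_nonpos (by linarith [hr.2])]
  ring

lemma exists_projection_line (hX : IsRTree X) (he : Isometry e) (y : X) :
    ∃ t₀, ∀ t, dist y (e t) = dist y (e t₀) + |t₀ - t| := by
  have hproper : Tendsto (fun t => dist y (e t)) (cocompact ℝ) atTop := by
    refine tendsto_atTop_mono (fun t => ?_)
      (tendsto_atTop_add_const_right _ (-dist y (e 0)) (tendsto_norm_cocompact_atTop (E := ℝ)))
    have htri := dist_triangle_left (e t) (e 0) y
    rw [he.dist_eq, dist_zero_right] at htri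
    linarith
  obtain ⟨t₀, hmin⟩ := (continuous_const.dist he.continuous).exists_forall_le hproper
  refine ⟨t₀, fun t => ?_⟩
  rw [← Real.dist_eq, ← he.dist_eq, eq_comm]
  exact (hX.metricBtw_of_isMinOn (hX.isMetricConvex_range he) (mem_range_self t₀)
    (forall_mem_range.2 hmin) (mem_range_self t))

-- The point at parameter `t` of one segment of the chain is at parameter `t` of every longer one:
-- the triangle inequalities through its endpoints add up to an equality.
lemma exists_metricBtw_chain (hX : IsRTree X) {p : ℤ → X} (hℓ : 0 < ℓ)
    (hp : ∀ i j, i ≤ j → dist (p i) (p j) = (j - i) * ℓ) (t : ℝ) :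
    ∃ y, ∀ M : ℕ, |t| ≤ M * ℓ → MetricBtw (p (-M)) y (p M) ∧ dist (p (-M)) y = M * ℓ + t := by
  have hlen : ∀ M : ℕ, dist (p (-M)) (p M) = 2 * (M * ℓ) := fun M => by
    rw [hp _ _ (by omega)]
    push_cast
    ring
  set N := ⌈|t| / ℓ⌉₊
  obtain ⟨hN₁, hN₂⟩ := abs_le.1 ((div_le_iff₀ hℓ).1 (Nat.le_ceil (|t| / ℓ)))
  obtain ⟨γ, hγ⟩ := hX.1 (p (-N)) (p N)
  have hs : N * ℓ + t ∈ Icc 0 (dist (p (-N)) (p N)) := by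
    rw [hlen]
    constructor <;> linarith
  refine ⟨γ (N * ℓ + t), fun M hM => ?_⟩
  have hNM : N ≤ M := Nat.ceil_le.2 ((div_le_iff₀ hℓ).2 hM)
  have hleft := hp (-M) (-N) (by omega)
  have hright := hp N M (by omega)
  have hγleft := hγ.dist_left hs
  have hγright := hγ.dist_right hs
  have htri := dist_triangle (p (-M)) (γ (N * ℓ + t)) (p M)
  have htrileft := dist_triangle (p (-M)) (p (-N)) (γ (N * ℓ + t))
  have htriright := dist_triangle (γ (N * ℓ + t)) (p N) (p M)
  push_cast at hleft hright
  rw [hlen] at hγright htri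
  rw [MetricBtw, hlen]
  constructor <;> linarith

lemma exists_isometry_through_chain (hX : IsRTree X) {p : ℤ → X} (hℓ : 0 < ℓ)
    (hp : ∀ i j, i ≤ j → dist (p i) (p j) = (j - i) * ℓ) :
    ∃ e : ℝ → X, Isometry e ∧ ∀ k : ℤ, e (k * ℓ) = p k := by
  choose e he using hX.exists_metricBtw_chain hℓ hp
  refine ⟨e, Isometry.of_dist_eq fun s t => ?_, fun k => ?_⟩
  · obtain ⟨M, hM⟩ := exists_nat_ge (max |s| |t| / ℓ)
    obtain ⟨hs, ht⟩ := max_le_iff.1 ((div_le_iff₀ hℓ).1 hM)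
    rw [hX.dist_eq_abs_sub (he s M hs).1 (he t M ht).1, (he s M hs).2, (he t M ht).2,
      add_sub_add_left_eq_sub, Real.dist_eq]
  · set M := k.natAbs
    have hk : |(k : ℝ) * ℓ| ≤ M * ℓ := by
      rw [abs_mul, abs_of_pos hℓ, Nat.cast_natAbs, Int.cast_abs]
    obtain ⟨hbtw, hleft⟩ := he _ M hk
    have hpleft := hp (-M) k (by omega)
    have hpright := hp k M (by omega)
    have hplen := hp (-M) M (by omega)
    push_cast at hpleft hpright hplen
    refine hX.eq_of_metricBtw hbtw ?_ ?_
    · rw [MetricBtw, hpleft, hpright, hplen]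
      ring
    · rw [hleft, hpleft]
      ring

end Lines

section HyperbolicIsometries

variable {g : X ≃ᵢ X} {e : ℝ → X} {ℓ : ℝ}

lemma exists_add_two_mul_dist_le (hX : IsRTree X) (hℓ : 0 < ℓ) (he : Isometry e)
    (hge : ∀ t, g (e t) = e (t + ℓ)) (y : X) : ∃ t, ℓ + 2 * dist y (e t) ≤ dist y (g y) := by
  obtain ⟨t, ht⟩ := hX.exists_projection_line he y
  refine ⟨t, ?_⟩
  have hy : dist y (e (t + ℓ)) = dist y (e t) + ℓ := by
    rw [ht, sub_add_cancel_left, abs_neg, abs_of_pos hℓ]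
  have hgy : dist (g y) (e (t + ℓ)) = dist y (e t) := by rw [← hge, g.dist_eq]
  have hback : g (e (t - ℓ)) = e t := by rw [hge, sub_add_cancel]
  have hgy' : dist (g y) (e t) = dist y (e t) + ℓ := by
    rw [← hback, g.dist_eq, ht, hback, sub_sub_cancel, abs_of_pos hℓ]
  have hℓ' : dist (e (t + ℓ)) (e t) = ℓ := by
    rw [he.dist_eq, dist_self_add_left, Real.norm_eq_abs, abs_of_pos hℓ]
  rcases le_max_iff.1 (hX.dist_add_dist_le_max y (e (t + ℓ)) (g y) (e t)) with h | h <;>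
    linarith [dist_comm (e (t + ℓ)) (g y)]

lemma isHyperbolicIsom_of_translates_line (hX : IsRTree X) (hℓ : 0 < ℓ) (he : Isometry e)
    (hge : ∀ t, g (e t) = e (t + ℓ)) : IsHyperbolicIsom g := by
  have hline : ∀ t, dist (e t) (g (e t)) = ℓ := fun t => by
    rw [hge, he.dist_eq, dist_self_add_right, Real.norm_eq_abs, abs_of_pos hℓ]
  have hlower : ∀ y, ℓ ≤ dist y (g y) := fun y => by
    obtain ⟨t, ht⟩ := hX.exists_add_two_mul_dist_le hℓ he hge y
    linarith [dist_nonneg (x := y) (y := e t)]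
  have hlength : translationLength g = ℓ := by
    have hleast : IsLeast (range fun y => dist y (g y)) ℓ :=
      ⟨⟨e 0, hline 0⟩, forall_mem_range.2 hlower⟩
    exact hleast.csInf_eq
  refine ⟨hlength ▸ hℓ, e, fun s t => by rw [he.dist_eq, Real.dist_eq], ?_⟩
  refine Subset.antisymm (range_subset_iff.2 fun t => (hline t).trans hlength.symm) ?_
  intro y (hy : dist y (g y) = translationLength g)
  obtain ⟨t, ht⟩ := hX.exists_add_two_mul_dist_le hℓ he hge y
  exact ⟨t, (dist_le_zero.1 (by linarith)).symm⟩

lemma dist_midpoints_le (hX : IsRTree X) {r n : X} (hqr : dist q r = dist p q)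
    (hpm : dist p m = dist p q / 2) (hmq : dist m q = dist p q / 2)
    (hqn : dist q n = dist p q / 2) (hnr : dist n r = dist p q / 2) :
    dist m n + dist p q ≤ max (dist p q) (dist p r) := by
  have hmr : dist m r + dist p q ≤ dist p q / 2 + max (dist p q) (dist p r) := by
    refine (hX.dist_add_dist_le_max m r p q).trans (max_le ?_ ?_)
    · linarith [le_max_left (dist p q) (dist p r), dist_comm m p, dist_comm r q]
    · linarith [le_max_right (dist p q) (dist p r), dist_comm r p]
  rcases le_max_iff.1 (hX.dist_add_dist_le_max m n q r) with h | h <;>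
    linarith [le_max_left (dist p q) (dist p r), dist_comm n q]

-- `m` is the midpoint of any displacement `[x, g x]`: the segments `[x, g x]` and `[g x, g² x]`
-- share less than half of their length, since otherwise `g` fixes their midpoint.
lemma exists_metricBtw_orbit (hX : IsRTree X) [Nonempty X] (hg : ¬ IsElliptic g) :
    ∃ m, MetricBtw m (g m) (g (g m)) := by
  obtain ⟨x⟩ := ‹Nonempty X›
  obtain ⟨m, hxm, hmx⟩ := hX.exists_midpoint x (g x)
  have hgx := g.dist_eq x (g x)
  have hgmx := g.dist_eq m (g x)
  have hgxm := g.dist_eq x m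
  have hmid := hX.dist_midpoints_le hgx hxm hmx (hgxm.trans hxm) (hgmx.trans hmx)
  have hlt : dist x (g x) < dist x (g (g x)) := by
    by_contra! hle
    rw [max_eq_left hle] at hmid
    exact hg ⟨m, (dist_le_zero.1 (by linarith)).symm⟩
  rw [max_eq_right hlt.le] at hmid
  have hx3 : 2 * dist x (g (g x)) - dist x (g x) ≤ dist x (g (g (g x))) := by
    rcases le_max_iff.1 (hX.dist_add_dist_le_max x (g (g x)) (g x) (g (g (g x)))) with h | h <;>
      linarith [g.dist_eq x (g (g x)), g.dist_eq (g x) (g (g x)), dist_comm (g (g x)) (g x)]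
  have hm3 := dist_triangle4 x m (g (g m)) (g (g (g x)))
  refine ⟨m, le_antisymm ?_ (dist_triangle _ _ _)⟩
  linarith [g.dist_eq m (g m), g.dist_eq (g m) (g (g x))]

lemma dist_pow_apply (hX : IsRTree X) (hgm : g m ≠ m) (hm : MetricBtw m (g m) (g (g m))) (n : ℕ) :
    dist m ((g ^ n) m) = n * dist m (g m) := by
  have hsucc : ∀ k : ℕ, (g ^ (k + 1)) m = (g ^ k) (g m) := fun k => by
    rw [pow_succ, IsometryEquiv.mul_apply]
  have hstep : ∀ k : ℕ, dist ((g ^ k) m) ((g ^ (k + 1)) m) = dist m (g m) := fun k => by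
    rw [hsucc, (g ^ k).dist_eq]
  have hlocal : ∀ k : ℕ, MetricBtw ((g ^ k) m) ((g ^ (k + 1)) m) ((g ^ (k + 2)) m) := fun k => by
    rw [hsucc (k + 1), hsucc k, pow_succ, IsometryEquiv.mul_apply]
    simpa only [MetricBtw, IsometryEquiv.dist_eq] using hm
  have hbtw : ∀ k : ℕ, MetricBtw m ((g ^ k) m) ((g ^ (k + 1)) m) := fun k => by
    induction k with
    | zero => simp [MetricBtw]
    | succ k ih =>
      refine hX.metricBtw_trans_of_ne ih (hlocal k) fun h => hgm ?_
      rw [hsucc] at h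
      exact ((g ^ k).injective h).symm
  induction n with
  | zero => simp
  | succ n ih =>
    rw [← hbtw n, ih, hstep]
    push_cast
    ring

lemma dist_zpow_apply (hX : IsRTree X) (hgm : g m ≠ m) (hm : MetricBtw m (g m) (g (g m)))
    {i j : ℤ} (hij : i ≤ j) : dist ((g ^ i) m) ((g ^ j) m) = (j - i) * dist m (g m) := by
  obtain ⟨n, rfl⟩ := Int.le.dest hij
  rw [zpow_add, IsometryEquiv.mul_apply, (g ^ i).dist_eq, zpow_natCast,
    hX.dist_pow_apply hgm hm]
  push_cast
  ring

lemma exists_translated_line (hX : IsRTree X) (hgm : g m ≠ m)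
    (hm : MetricBtw m (g m) (g (g m))) :
    ∃ e : ℝ → X, Isometry e ∧ ∀ t, g (e t) = e (t + dist m (g m)) := by
  set ℓ := dist m (g m)
  have hℓ : 0 < ℓ := dist_pos.2 hgm.symm
  obtain ⟨e, he, hek⟩ :=
    hX.exists_isometry_through_chain hℓ fun _ _ hij => hX.dist_zpow_apply hgm hm hij
  have hint : ∀ k : ℤ, g (e (k * ℓ)) = e (k * ℓ + ℓ) := fun k => by
    rw [← add_one_mul, ← Int.cast_one, ← Int.cast_add, hek, hek, add_comm, zpow_one_add,
      IsometryEquiv.mul_apply]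
  refine ⟨e, he, fun t => ?_⟩
  have hfloor : ⌊t / ℓ⌋ * ℓ ≤ t := (le_div_iff₀ hℓ).1 (Int.floor_le _)
  have hfloor' : t ≤ (⌊t / ℓ⌋ + 1 : ℤ) * ℓ := by
    push_cast
    exact ((div_lt_iff₀ hℓ).1 (Int.lt_floor_add_one _)).le
  exact hX.eqOn_Icc_of_isometry (g.isometry.comp he) (he.comp (isometry_add_right ℓ))
    (hint _) (hint _) ⟨hfloor, hfloor'⟩

theorem isHyperbolicIsom_of_not_isElliptic (hX : IsRTree X) [Nonempty X] (hg : ¬ IsElliptic g) :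
    IsHyperbolicIsom g := by
  obtain ⟨m, hm⟩ := hX.exists_metricBtw_orbit hg
  have hgm : g m ≠ m := fun h => hg ⟨m, h⟩
  obtain ⟨e, he, hge⟩ := hX.exists_translated_line hgm hm
  exact hX.isHyperbolicIsom_of_translates_line (dist_pos.2 hgm.symm) he hge

end HyperbolicIsometries

end IsRTree

section LimitActions

open scoped Topology

lemma exists_isometricAction_of_surjective {G P T : Type*} [Group G] [MulAction G P]
    [MetricSpace T] {π : P → T} (hπ : Function.Surjective π)
    (hinv : ∀ (g : G) (p q : P), dist (π (g • p)) (π (g • q)) = dist (π p) (π q)) :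
    ∃ σ : G →* (T ≃ᵢ T), ∀ (g : G) (p : P), σ g (π p) = π (g • p) := by
  let _ : SMul G T := ⟨fun g z => π (g • Function.surjInv hπ z)⟩
  have hsmul : ∀ (g : G) (p : P), π (g • p) = g • π p := fun g p => by
    refine dist_eq_zero.1 ((hinv g p _).trans ?_)
    rw [Function.surjInv_eq hπ, dist_self]
  let _ : MulAction G T := hπ.mulAction π hsmul
  have : IsIsometricSMul G T := ⟨fun g => Isometry.of_dist_eq <| hπ.forall₂.2 fun p q => by
    rw [← hsmul, ← hsmul, hinv]⟩
  exact ⟨{ toFun := IsometryEquiv.constSMul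
           map_one' := IsometryEquiv.ext (one_smul G)
           map_mul' := fun g h => IsometryEquiv.ext (mul_smul g h) }, fun g p => (hsmul g p).symm⟩

lemma translationLength_le {X : Type*} [MetricSpace X] (τ : X ≃ᵢ X) (x : X) :
    translationLength τ ≤ dist x (τ x) :=
  ciInf_le ⟨0, forall_mem_range.2 fun _ => dist_nonneg⟩ x

variable {G H : Type*} [MetricSpace H] {S : Finset G}

lemma dist_le_rS {f : G → (H ≃ᵢ H)} (hS : S.Nonempty) {s : G} (hs : s ∈ S) (x : H) :
    dist x (f s x) ≤ rS S hS f x :=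
  Finset.le_sup' (fun s => dist x (f s x)) hs

variable [Group G] {ρ : ℕ → G →* (H ≃ᵢ H)}

-- The constant is the word length of `g`.
lemma exists_dist_le_mul_rS (hS : S.Nonempty) (hgen : Subgroup.closure (S : Set G) = ⊤) (g : G) :
    ∃ N : ℕ, ∀ (f : G →* (H ≃ᵢ H)) (x : H), dist x (f g x) ≤ N * rS S hS f x := by
  have hg : g ∈ Subgroup.closure (S : Set G) := hgen ▸ Subgroup.mem_top g
  induction hg using Subgroup.closure_induction with
  | mem s hs => exact ⟨1, fun f x => by simpa using dist_le_rS hS hs x⟩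
  | one => exact ⟨0, fun f x => by simp⟩
  | mul g h _ _ ihg ihh =>
    obtain ⟨N, hN⟩ := ihg
    obtain ⟨M, hM⟩ := ihh
    refine ⟨N + M, fun f x => ?_⟩
    calc dist x (f (g * h) x) ≤ dist x (f g x) + dist (f g x) (f g (f h x)) := by
          rw [map_mul, IsometryEquiv.mul_apply]
          exact dist_triangle _ _ _
      _ ≤ N * rS S hS f x + M * rS S hS f x := by
          rw [(f g).dist_eq]
          exact add_le_add (hN f x) (hM f x)
      _ = (N + M : ℕ) * rS S hS f x := by push_cast; ring
  | inv g _ ih =>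
    obtain ⟨N, hN⟩ := ih
    refine ⟨N, fun f x => ?_⟩
    rw [← (f g).dist_eq, map_inv, IsometryEquiv.apply_inv_self, dist_comm]
    exact hN f x

lemma tendsto_rS_atTop (hS : S.Nonempty) (hgen : Subgroup.closure (S : Set G) = ⊤)
    (hblow : ∃ g, Tendsto (fun n => translationLength (ρ n g)) atTop atTop) (x : ℕ → H) :
    Tendsto (fun n => rS S hS (ρ n) (x n)) atTop atTop := by
  obtain ⟨g, hg⟩ := hblow
  obtain ⟨N, hN⟩ := exists_dist_le_mul_rS (H := H) hS hgen g
  have hle : ∀ n, translationLength (ρ n g) ≤ N * rS S hS (ρ n) (x n) := fun n =>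
    (translationLength_le _ _).trans (hN (ρ n) (x n))
  have hmul := tendsto_atTop_mono hle hg
  rcases N.eq_zero_or_pos with rfl | hpos
  · simp only [Nat.cast_zero, zero_mul] at hmul
    exact absurd tendsto_const_nhds (hmul.not_tendsto (disjoint_nhds_atTop 0).symm)
  · exact (tendsto_const_mul_atTop_of_pos (Nat.cast_pos.2 hpos)).1 hmul

variable {P T : Type*} [MulAction G P] [MetricSpace T] {ι : ℕ → P → H} {π : P → T}
  {σ : G → (T ≃ᵢ T)} {l : ℕ → ℝ}

lemma tendsto_rescaled_rS (hS : S.Nonempty) (hl : ∀ n, 0 ≤ l n)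
    (hι : ∀ n g p, ι n (g • p) = ρ n g (ι n p)) (hσ : ∀ g p, σ g (π p) = π (g • p))
    (hconv : ∀ p q, Tendsto (fun n => l n * dist (ι n p) (ι n q)) atTop (𝓝 (dist (π p) (π q))))
    (p : P) : Tendsto (fun n => l n * rS S hS (ρ n) (ι n p)) atTop (𝓝 (rS S hS σ (π p))) := by
  have hmul : ∀ n, l n * rS S hS (ρ n) (ι n p) =
      S.sup' hS fun s => l n * dist (ι n p) (ι n (s • p)) := fun n => by
    simp only [hι]
    exact Finset.mul₀_sup' (hl n) _ S hS
  simp only [hmul]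
  simp only [rS, hσ]
  exact Tendsto.finset_sup'_nhds_apply hS fun s _ => hconv p (s • p)

lemma one_le_of_tendsto_rescaled {r u : ℕ → ℝ} {a : ℝ} (hr : Tendsto r atTop atTop)
    (hru : ∀ n, r n ≤ u n + 1) (hu : Tendsto (fun n => (max 1 (r n))⁻¹ * u n) atTop (𝓝 a)) :
    1 ≤ a := by
  have hlower : Tendsto (fun n => 1 - (r n)⁻¹) atTop (𝓝 1) := by
    simpa using hr.inv_tendsto_atTop.const_sub 1
  refine le_of_tendsto_of_tendsto hlower hu ?_
  filter_upwards [hr.eventually_ge_atTop 1] with n hn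
  have hpos : 0 < r n := one_pos.trans_le hn
  calc 1 - (r n)⁻¹ = (r n)⁻¹ * (r n - 1) := by rw [mul_sub_one, inv_mul_cancel₀ hpos.ne']
    _ ≤ (r n)⁻¹ * u n := by gcongr; linarith [hru n]
    _ = (max 1 (r n))⁻¹ * u n := by rw [max_eq_right hn]

lemma IsRTree.exists_isHyperbolicIsom_of_no_common_fixedPoint (hT : IsRTree T) [Nonempty T]
    (hS : S.Nonempty) (σ : G →* (T ≃ᵢ T)) (hfix : ¬ ∃ z, ∀ s ∈ S, σ s z = z) :
    ∃ g, IsHyperbolicIsom (σ g) := by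
  by_contra! hhyp
  have hell : ∀ g, IsElliptic (σ g) := fun g =>
    by_contra fun hg => hhyp g (hT.isHyperbolicIsom_of_not_isElliptic hg)
  exact hfix (hT.exists_common_fixedPoint_of_isElliptic hS σ (fun s _ => hell s)
    fun s _ t _ => map_mul σ s t ▸ hell (s * t))

-- `P` takes the place of `K(G)`, and `(max 1 (rS S hS (ρ n) (x n)))⁻¹` that of the factor `λ_n`.
theorem limit_action_no_global_fixed_point_general {G H P T : Type*} [Group G] [MetricSpace H]
    [MulAction G P] [Nonempty P] [MetricSpace T]
    (S : Finset G) (hS : S.Nonempty) (hgen : Subgroup.closure (S : Set G) = ⊤)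
    (ρ : ℕ → G →* (H ≃ᵢ H))
    (hblow : ∃ g, Tendsto (fun n => translationLength (ρ n g)) atTop atTop)
    (x : ℕ → H) (hcenter : ∀ n y, rS S hS (ρ n) (x n) ≤ rS S hS (ρ n) y + 1)
    (ι : ℕ → P → H) (hequiv : ∀ n g p, ι n (g • p) = ρ n g (ι n p))
    (π : P → T) (hπ : Function.Surjective π)
    (hconv : ∀ p q, Tendsto (fun n => (max 1 (rS S hS (ρ n) (x n)))⁻¹ * dist (ι n p) (ι n q))
      atTop (𝓝 (dist (π p) (π q))))
    (htree : IsRTree T) :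
    ∃ σ : G →* (T ≃ᵢ T), (∀ g p, σ g (π p) = π (g • p)) ∧ (¬ ∃ z, ∀ g, σ g z = z) ∧
      ∃ g, IsHyperbolicIsom (σ g) := by
  have hinv : ∀ (g : G) p q, dist (π (g • p)) (π (g • q)) = dist (π p) (π q) := fun g p q =>
    tendsto_nhds_unique (hconv (g • p) (g • q)) <| by
      simpa only [hequiv, IsometryEquiv.dist_eq] using hconv p q
  obtain ⟨σ, hσ⟩ := exists_isometricAction_of_surjective hπ hinv
  have hdisp : ∀ z, 1 ≤ rS S hS σ z := hπ.forall.2 fun p =>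
    one_le_of_tendsto_rescaled (tendsto_rS_atTop hS hgen hblow x) (fun n => hcenter n (ι n p))
      (tendsto_rescaled_rS hS (fun n => by positivity) hequiv hσ hconv p)
  have hfix : ¬ ∃ z, ∀ s ∈ S, σ s z = z := fun ⟨z, hz⟩ => by
    have hzero : rS S hS σ z ≤ 0 := Finset.sup'_le hS _ fun s hs => by rw [hz s hs, dist_self]
    linarith [hdisp z]
  have : Nonempty T := ‹Nonempty P›.map π
  exact ⟨σ, hσ, fun ⟨z, hz⟩ => hfix ⟨z, fun s _ => hz s⟩,
    htree.exists_isHyperbolicIsom_of_no_common_fixedPoint hS σ hfix⟩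

end LimitActions

section CompleteGraphAction

/-- The left-multiplication action of `G` on `K(G)`, which makes `leftMulKG` available as `•`. -/
noncomputable instance KG.instMulAction {G : Type*} [Group G] : MulAction G (KG G) where
  smul := leftMulKG
  one_smul p := Subtype.ext <| funext fun y => congrArg p.1 (by rw [inv_one, one_mul])
  mul_smul g h p := Subtype.ext <| funext fun y => congrArg p.1 (by rw [mul_inv_rev, mul_assoc])

lemma rescaleFactor_eq_inv_max_rS {G H : Type*} [Group G] [MetricSpace H] {S : Finset G}
    (hS : S.Nonempty) {f : G →* (H ≃ᵢ H)} {x : H} {ι : KG G → H} (hι : ∀ g, ι (vtx g) = f g x) :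
    rescaleFactor S hS ι = (max 1 (rS S hS f x))⁻¹ := by
  simp only [rescaleFactor, rS, hι, map_one]
  rfl

end CompleteGraphAction

/-- In the rescaled limit of a blowing-up sequence of representations,
the left multiplication action of `G` on `K(G)` induces an isometric action of `G` on the
limit `ℝ`-tree with no global fixed point, and some element acts hyperbolically. -/
theorem limit_action_no_global_fixed_point {G : Type u} [Group G]
    (S : Finset G) (hS : S.Nonempty) (hgen : Subgroup.closure (S : Set G) = ⊤)
    {H : Type v} [MetricSpace H] [Nonempty H] {Δ : ℝ} (hΔ : 0 < Δ)
    (hgeo : GeodesicSpace H) (hthin : ThinTriangles H Δ)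
    (ρ : ℕ → G →* (H ≃ᵢ H))
    (hblow : ∃ α : G,
      Filter.Tendsto (fun n => translationLength (ρ n α)) Filter.atTop Filter.atTop)
    (x : ℕ → H)
    (hcenter : ∀ n, ∀ y : H, rS S hS (ρ n) (x n) ≤ rS S hS (ρ n) y + 1)
    (ι : ℕ → KG G → H)
    (hvert : ∀ n, ∀ g : G, ι n (vtx g) = ρ n g (x n))
    (hstraight : ∀ n, StraightOnKG (ι n))
    (hequiv : ∀ n, ∀ g : G, ∀ p : KG G, ι n (leftMulKG g p) = ρ n g (ι n p))
    (dbar : KG G → KG G → ℝ)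
    (hconv : ∀ p q : KG G,
      Filter.Tendsto (fun n => rescaleFactor S hS (ι n) * dist (ι n p) (ι n q))
        Filter.atTop (nhds (dbar p q)))
    (T : Type w) [MetricSpace T] (qm : KG G → T)
    (hsurj : Function.Surjective qm) (hdist : ∀ p q', dist (qm p) (qm q') = dbar p q')
    (htree : IsRTree T) :
    ∃ σ : G →* (T ≃ᵢ T),
      (∀ g : G, ∀ p : KG G, σ g (qm p) = qm (leftMulKG g p)) ∧
      (¬ ∃ z : T, ∀ g : G, σ g z = z) ∧
      (∃ g : G, IsHyperbolicIsom (σ g)) := by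
  have : Nonempty (KG G) := ⟨vtx 1⟩
  refine limit_action_no_global_fixed_point_general S hS hgen ρ hblow x hcenter ι hequiv qm hsurj
    (fun p q => ?_) htree
  simpa only [rescaleFactor_eq_inv_max_rS hS (hvert _), hdist] using hconv p q
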